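/- (Speed of evolution under constraints cannot exceed ω.) Let H and G be Hermitian N×N complex matrices, ψ ∈ ℂ^N a unit vector, λ₀ a nonzero real number, ω ≥ 0 a real number, and set F := λ₀·(H + G) and P := ψψ*. Assume Tr H = 0, Tr G = 0, Tr(H·G) = 0, Tr(H²) = 2ω², and F·P + P·F = F. Then Var_ψ(H) = ω² − ((1/2)·Tr(G²) − Var_ψ(G)), and consequently Var_ψ(H) ≤ ω². -/

import Mathlib

open Matrix

/-!
With `Q = 1 - P`, the condition `K * P + P * K = K` says that `K = H + G` has vanishing diagonal
blocks `P * K * P` and `Q * K * Q`, so `H` and `-G` have the same diagonal blocks. On the other hand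
`2 Var_ψ(A)` is exactly the contribution of the off-diagonal blocks to `Tr A²`. Hence
`Tr H² - 2 Var_ψ(H) = Tr G² - 2 Var_ψ(G)`, and for Hermitian `G` the common value is the squared
Hilbert–Schmidt norm of the block-diagonal part of `G`, which is nonnegative.
-/

section Pinching

variable {A : Type*} [Ring A] {p : A}

/-- The pinching of `a` by `p`: for `p` idempotent, the block-diagonal part of `a` with respect to
`p` and its complement `1 - p`. It is defined for every `p`. -/
def pinching (p a : A) : A :=
  p * a * p + (1 - p) * a * (1 - p)

theorem pinching_add (p a b : A) : pinching p (a + b) = pinching p a + pinching p b := by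
  simp only [pinching, mul_add, add_mul]
  abel

theorem pinching_pinching (hp : IsIdempotentElem p) (a : A) :
    pinching p (pinching p a) = pinching p a := by
  simp only [pinching, mul_add, ← mul_assoc, hp.eq, hp.one_sub.eq, hp.mul_one_sub_self,
    hp.one_sub_mul_self, zero_mul, add_zero, zero_add]
  simp only [mul_assoc, hp.eq, hp.one_sub.eq]

theorem pinching_eq_zero_of_mul_add_mul_eq (hp : IsIdempotentElem p) {a : A}
    (ha : a * p + p * a = a) : pinching p a = 0 := by
  have hpap : p * a * p = 0 := by
    have h : p * a * p + p * a = p * a := by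
      simpa only [mul_add, ← mul_assoc, hp.eq] using congrArg (p * ·) ha
    exact add_eq_right.mp h
  calc pinching p a = 2 • (p * a * p) + (a - (a * p + p * a)) := by
        rw [pinching]; noncomm_ring
    _ = 0 := by rw [hpap, ha, smul_zero, sub_self, add_zero]

theorem isSelfAdjoint_pinching [StarRing A] {a : A} (hp : IsSelfAdjoint p) (ha : IsSelfAdjoint a) :
    IsSelfAdjoint (pinching p a) := by
  have hq : IsSelfAdjoint (1 - p) := (IsSelfAdjoint.one A).sub hp
  simpa only [pinching, hp.star_eq, hq.star_eq] using (ha.conjugate p).add (ha.conjugate (1 - p))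

end Pinching

section Trace

variable {R n : Type*} [CommRing R] [Fintype n]

theorem trace_pinching_mul_eq_trace_mul_pinching [DecidableEq n] (P A B : Matrix n n R) :
    (pinching P A * B).trace = (A * pinching P B).trace := by
  have cycle (S : Matrix n n R) : (S * A * S * B).trace = (A * (S * B * S)).trace := by
    rw [mul_assoc, mul_assoc, trace_mul_comm]
    simp only [mul_assoc]
  simp only [pinching, add_mul, mul_add, trace_add, cycle]

theorem trace_pinching_mul_self [DecidableEq n] {P : Matrix n n R} (hP : IsIdempotentElem P)
    (A : Matrix n n R) :
    (pinching P A * pinching P A).trace =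
      (A * A).trace - 2 * ((A * A * P).trace - (A * P * A * P).trace) := by
  have expand : A * pinching P A = A * A - A * A * P - A * P * A + 2 • (A * P * A * P) := by
    rw [pinching]; noncomm_ring
  have cycle : (A * P * A).trace = (A * A * P).trace := by
    rw [trace_mul_cycle, trace_mul_cycle]
  rw [trace_pinching_mul_eq_trace_mul_pinching, pinching_pinching hP, expand, trace_add, trace_sub,
    trace_sub, trace_smul, cycle, nsmul_eq_mul, Nat.cast_ofNat]
  ring

end Trace

section RankOne

variable {R n : Type*} [CommSemiring R] [Fintype n]

theorem trace_mul_vecMulVec (A : Matrix n n R) (u v : n → R) :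
    (A * vecMulVec u v).trace = v ⬝ᵥ (A *ᵥ u) := by
  rw [mul_vecMulVec, trace_vecMulVec, dotProduct_comm]

theorem trace_mul_vecMulVec_mul_vecMulVec (A B : Matrix n n R) (u v : n → R) :
    (A * vecMulVec u v * B * vecMulVec u v).trace = (v ⬝ᵥ (A *ᵥ u)) * (v ⬝ᵥ (B *ᵥ u)) := by
  rw [mul_assoc (A * _), mul_vecMulVec, mul_vecMulVec, vecMulVec_mul_vecMulVec, trace_vecMulVec,
    dotProduct_smul, smul_eq_mul, dotProduct_comm (A *ᵥ u), mul_comm]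

theorem isIdempotentElem_vecMulVec {u v : n → R} (h : v ⬝ᵥ u = 1) :
    IsIdempotentElem (vecMulVec u v) := by
  rw [IsIdempotentElem, vecMulVec_mul_vecMulVec, h, one_smul]

end RankOne

section Variance

variable {R n : Type*} [CommRing R] [Fintype n]

/-- The variance `⟨ψ, A²ψ⟩ - ⟨ψ, Aψ⟩²` of the observable `A` in the state `ψ`. It takes values
in the scalar ring, so it is also defined for non-Hermitian `A`. A state is a vector `ψ` with
`star ψ ⬝ᵥ ψ = 1`, but the formula is used as the definition for every `ψ`. -/
def stateVariance [Star R] (A : Matrix n n R) (ψ : n → R) : R :=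
  star ψ ⬝ᵥ ((A * A) *ᵥ ψ) - (star ψ ⬝ᵥ (A *ᵥ ψ)) ^ 2

theorem trace_pinching_vecMulVec_mul_self [Star R] [DecidableEq n] (A : Matrix n n R) {ψ : n → R}
    (hψ : star ψ ⬝ᵥ ψ = 1) :
    (pinching (vecMulVec ψ (star ψ)) A * pinching (vecMulVec ψ (star ψ)) A).trace =
      (A * A).trace - 2 * stateVariance A ψ := by
  rw [trace_pinching_mul_self (isIdempotentElem_vecMulVec hψ), trace_mul_vecMulVec,
    trace_mul_vecMulVec_mul_vecMulVec, stateVariance, sq]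

theorem trace_mul_self_sub_two_mul_stateVariance_eq [Star R] {H G : Matrix n n R} {ψ : n → R}
    (hψ : star ψ ⬝ᵥ ψ = 1)
    (hHG : (H + G) * vecMulVec ψ (star ψ) + vecMulVec ψ (star ψ) * (H + G) = H + G) :
    (H * H).trace - 2 * stateVariance H ψ = (G * G).trace - 2 * stateVariance G ψ := by
  classical
  have hsum := pinching_eq_zero_of_mul_add_mul_eq (isIdempotentElem_vecMulVec hψ) hHG
  rw [pinching_add] at hsum
  rw [← trace_pinching_vecMulVec_mul_self H hψ, ← trace_pinching_vecMulVec_mul_self G hψ,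
    eq_neg_of_add_eq_zero_left hsum, neg_mul_neg]

theorem two_mul_stateVariance_le_trace_mul_self [PartialOrder R] [StarRing R] [StarOrderedRing R]
    {A : Matrix n n R} (hA : A.IsHermitian) {ψ : n → R} (hψ : star ψ ⬝ᵥ ψ = 1) :
    2 * stateVariance A ψ ≤ (A * A).trace := by
  classical
  have hP : (vecMulVec ψ (star ψ)).IsHermitian := (posSemidef_vecMulVec_self_star ψ).isHermitian
  have hpinch : (pinching (vecMulVec ψ (star ψ)) A)ᴴ = pinching (vecMulVec ψ (star ψ)) A :=
    isSelfAdjoint_pinching hP hA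
  rw [← sub_nonneg, ← trace_pinching_vecMulVec_mul_self A hψ]
  nth_rw 1 [← hpinch]
  exact (posSemidef_conjTranspose_mul_self _).trace_nonneg

end Variance

open scoped ComplexOrder in
theorem speed_of_evolution_le_omega_general {𝕜 n : Type*} [RCLike 𝕜] [Fintype n]
    {H G : Matrix n n 𝕜} (hG : G.IsHermitian) {ψ : n → 𝕜} (hψ : star ψ ⬝ᵥ ψ = 1)
    {lam0 : 𝕜} (hlam0 : lam0 ≠ 0) {ω : 𝕜} {F : Matrix n n 𝕜} (hFdef : F = lam0 • (H + G))
    (htrH2 : (H * H).trace = 2 * ω ^ 2)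
    (hF : F * vecMulVec ψ (star ψ) + vecMulVec ψ (star ψ) * F = F) :
    stateVariance H ψ = ω ^ 2 - ((1 / 2) * (G * G).trace - stateVariance G ψ) ∧
      stateVariance H ψ ≤ ω ^ 2 := by
  have hHG : (H + G) * vecMulVec ψ (star ψ) + vecMulVec ψ (star ψ) * (H + G) = H + G := by
    rw [hFdef, smul_mul_assoc, mul_smul_comm, ← smul_add] at hF
    exact smul_right_injective _ hlam0 hF
  have htrace := trace_mul_self_sub_two_mul_stateVariance_eq hψ hHG
  have hvar : 2 * stateVariance H ψ ≤ 2 * ω ^ 2 := by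
    rw [← htrH2, ← sub_nonneg, htrace, sub_nonneg]
    exact two_mul_stateVariance_le_trace_mul_self hG hψ
  refine ⟨?_, le_of_mul_le_mul_left hvar two_pos⟩
  linear_combination (htrH2 - htrace) / 2

/-- Speed of evolution under constraints cannot exceed `ω`:
with `F = λ₀(H+G)`, `P = ψψ*`, `Tr H = Tr G = Tr(HG) = 0`, `Tr H² = 2ω²`, and
`FP + PF = F`, one has `Var_ψ(H) = ω² − ((1/2)Tr G² − Var_ψ(G))`, hence `Var_ψ(H) ≤ ω²`. -/
theorem speed_of_evolution_le_omega {N : ℕ}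
    (H G : Matrix (Fin N) (Fin N) ℂ) (hH : H.IsHermitian) (hG : G.IsHermitian)
    (ψ : Fin N → ℂ) (hψ : star ψ ⬝ᵥ ψ = 1)
    (lam0 : ℝ) (hlam0 : lam0 ≠ 0) (ω : ℝ) (hω : 0 ≤ ω)
    (F : Matrix (Fin N) (Fin N) ℂ) (hFdef : F = (lam0 : ℂ) • (H + G))
    (htrH : H.trace = 0) (htrG : G.trace = 0) (htrHG : (H * G).trace = 0)
    (htrH2 : (H * H).trace = 2 * (ω : ℂ) ^ 2)
    (hF : F * vecMulVec ψ (star ψ) + vecMulVec ψ (star ψ) * F = F) :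
    star ψ ⬝ᵥ ((H * H) *ᵥ ψ) - (star ψ ⬝ᵥ (H *ᵥ ψ)) ^ 2 =
      (ω : ℂ) ^ 2 - ((1 / 2) * (G * G).trace -
        (star ψ ⬝ᵥ ((G * G) *ᵥ ψ) - (star ψ ⬝ᵥ (G *ᵥ ψ)) ^ 2)) ∧
    (star ψ ⬝ᵥ ((H * H) *ᵥ ψ) - (star ψ ⬝ᵥ (H *ᵥ ψ)) ^ 2).im = 0 ∧
    (star ψ ⬝ᵥ ((H * H) *ᵥ ψ) - (star ψ ⬝ᵥ (H *ᵥ ψ)) ^ 2).re ≤ ω ^ 2 := by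
  obtain ⟨hvar, hle⟩ := speed_of_evolution_le_omega_general hG hψ
    (Complex.ofReal_ne_zero.mpr hlam0) hFdef htrH2 hF
  rw [← Complex.ofReal_pow, Complex.le_def] at hle
  exact ⟨hvar, hle.2, hle.1⟩
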